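/- Let p be an odd prime, M, G finite p-groups, μ : M → G a crossed module with M powerful and μ(M) powerfully embedded in G. Then M^p ⊗ G ≤ (M ⊗ G)^p and consequently M ⊗ G is a finite powerful p-group. -/

import Mathlib

/-- The subgroup generated by `k`-th powers of elements of `N`. -/
def sPow {G : Type*} [Group G] (N : Subgroup G) (k : ℕ) : Subgroup G :=
  Subgroup.closure ((· ^ k) '' (N : Set G))

/-- A crossed module: a homomorphism `μ : M → G` with an action `φ` of `G` on `M`
by automorphisms satisfying the two crossed-module axioms. -/
structure IsCrossedModule {M G : Type*} [Group M] [Group G]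
    (μ : M →* G) (φ : G →* MulAut M) : Prop where
  map_act : ∀ (g : G) (m : M), μ (φ g m) = g * μ m * g⁻¹
  peiffer : ∀ m m' : M, φ (μ m) m' = m * m' * m⁻¹

/-- The defining relations of the nonabelian tensor product `M ⊗ G` of a crossed
module `μ : M → G` (with `G` acting on `M` via `φ`, `M` acting on `G` via `μ` and
conjugation, and `G` acting on itself by conjugation):
`mm' ⊗ g = (ᵐm' ⊗ ᵐg)(m ⊗ g)` and `m ⊗ gg' = (m ⊗ g)(ᵍm ⊗ ᵍg')`. -/
def tensorRels {M G : Type*} [Group M] [Group G] (μ : M →* G) (φ : G →* MulAut M) :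
    Set (FreeGroup (M × G)) :=
  {r | ∃ m m' g, r = FreeGroup.of (m * m', g) *
      (FreeGroup.of (φ (μ m) m', μ m * g * (μ m)⁻¹) * FreeGroup.of (m, g))⁻¹} ∪
  {r | ∃ m g g', r = FreeGroup.of (m, g * g') *
      (FreeGroup.of (m, g) * FreeGroup.of (φ g m, g * g' * g⁻¹))⁻¹}

/-- The nonabelian tensor product `M ⊗ G` of a crossed module. -/
abbrev NATensor {M G : Type*} [Group M] [Group G] (μ : M →* G) (φ : G →* MulAut M) :=
  PresentedGroup (tensorRels μ φ)

/-- The generator `m ⊗ g` of the nonabelian tensor product. -/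
def natTprod {M G : Type*} [Group M] [Group G] (μ : M →* G) (φ : G →* MulAut M)
    (m : M) (g : G) : NATensor μ φ :=
  PresentedGroup.of (m, g)

/-!
Put `T = M ⊗ G`, on which `G` acts diagonally.

*Finiteness.* Conjugation by `x ⊗ g` is the action of `⁅μ x, g⁆ ∈ μ M`, so the centre of `T` has
index dividing `|M|`. In the abelianization, averaging the two biderivation identities first over
`G` and then over `M` bounds the exponent by `|G| |M|`, and the transfer to the centre kills the
commutator subgroup of `T`, so the exponent of `T` divides `|G| |M|²`.

*Powerfulness.* In `E = T ⋊ G` the map `g ↦ (m ⊗ g) g` is a homomorphism. Modulo a normal subgroup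
containing `T ^ p` and `⁅⁅μ M, T⁆, E⁆`, the class-two power formula for an odd exponent gives
`((m ⊗ g) g) ^ p ≡ g ^ p` for `g ∈ μ M`, that is, `m ⊗ g ^ p ≡ 1`. Hence `m ⊗ ⁅μ x, g⁆ ≡ 1`, because
`μ M` is powerfully embedded; but `m ⊗ ⁅μ x, g⁆` is the commutator of `μ m` and `x ⊗ g` in `E`, so
`⁅μ M, T⁆ ≤ T ^ p ⁅⁅μ M, T⁆, E⁆`. As `E` is nilpotent, `⁅μ M, T⁆ ≤ T ^ p`. So `μ M` acts trivially
on `T / T ^ p`, which is therefore abelian, and there `m ⊗ g` is multiplicative in `m`.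
-/

open scoped commutatorElement

section GroupTheory

variable {E F : Type*} [Group E] [Group F]

theorem commutatorElement_pow_right_of_commute {x y : E} (h : Commute ⁅y, x⁆ x) (n : ℕ) :
    ⁅y, x ^ n⁆ = ⁅y, x⁆ ^ n := by
  have hconj : y * x * y⁻¹ = ⁅y, x⁆ * x := by simp [commutatorElement_def]
  rw [commutatorElement_def, ← conj_pow, hconj, h.mul_pow, mul_inv_cancel_right]

theorem commutatorElement_pow_left_of_commute {x y : E} (h : Commute ⁅y, x⁆ y) (n : ℕ) :
    ⁅y ^ n, x⁆ = ⁅y, x⁆ ^ n := by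
  have h' : Commute ⁅x, y⁆ y := commutatorElement_inv y x ▸ h.inv_left
  rw [← commutatorElement_inv, commutatorElement_pow_right_of_commute h', ← inv_pow,
    commutatorElement_inv]

theorem mul_pow_of_commute_commutatorElement {x y : E} (hx : Commute ⁅y, x⁆ x)
    (hy : Commute ⁅y, x⁆ y) (n : ℕ) :
    (x * y) ^ n = x ^ n * y ^ n * ⁅y, x⁆ ^ n.choose 2 := by
  induction n with
  | zero => simp
  | succ n ih =>
    have hyx : y ^ n * x = x * ⁅y, x⁆ ^ n * y ^ n := by
      rw [← (hx.pow_left n).eq, ← commutatorElement_pow_left_of_commute hy]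
      simp [commutatorElement_def]
    calc (x * y) ^ (n + 1)
        = x ^ n * y ^ n * (⁅y, x⁆ ^ n.choose 2 * (x * y)) := by rw [pow_succ, ih]; group
      _ = x ^ n * (y ^ n * x) * y * ⁅y, x⁆ ^ n.choose 2 := by
        rw [((hx.mul_right hy).pow_left _).eq]; simp only [mul_assoc]
      _ = x ^ (n + 1) * (⁅y, x⁆ ^ n * y ^ (n + 1)) * ⁅y, x⁆ ^ n.choose 2 := by
        rw [hyx]; simp only [pow_succ, mul_assoc]
      _ = x ^ (n + 1) * y ^ (n + 1) * ⁅y, x⁆ ^ (n + 1).choose 2 := by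
        rw [(hy.pow_pow n (n + 1)).eq, Nat.choose_succ_succ' n 1, Nat.choose_one_right,
          pow_add ⁅y, x⁆]
        simp only [mul_assoc]

theorem dvd_choose_two_of_odd {n : ℕ} (hn : Odd n) : n ∣ n.choose 2 := by
  obtain ⟨r, rfl⟩ := hn
  rw [Nat.choose_two_right, Nat.add_sub_cancel, mul_left_comm, Nat.mul_div_cancel_left _ two_pos]
  exact dvd_mul_right _ r

theorem mul_pow_eq_pow_right_of_odd {n : ℕ} (hn : Odd n) {x y : E} (hx : Commute ⁅y, x⁆ x)
    (hy : Commute ⁅y, x⁆ y) (hxn : x ^ n = 1) : (x * y) ^ n = y ^ n := by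
  have hc : ⁅y, x⁆ ^ n = 1 := by
    rw [← commutatorElement_pow_right_of_commute hx, hxn, commutatorElement_one_right]
  obtain ⟨r, hr⟩ := dvd_choose_two_of_odd hn
  rw [mul_pow_of_commute_commutatorElement hx hy, hr, pow_mul, hc, hxn, one_pow, mul_one, one_mul]

theorem eq_bot_of_le_commutator_top [Group.IsNilpotent E] {H : Subgroup E} (h : H ≤ ⁅H, ⊤⁆) :
    H = ⊥ := by
  have hH : ∀ n, H ≤ (⊤ : Subgroup E).lowerCentralSeries n := fun n => by
    induction n with
    | zero => exact le_top
    | succ n ih =>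
      exact h.trans (Subgroup.commutator_mono ih le_rfl)
  obtain ⟨n, hn⟩ := Subgroup.nilpotent_iff_lowerCentralSeries.1 ‹Group.IsNilpotent E›
  exact le_bot_iff.1 (hn ▸ hH n)

theorem le_of_le_sup_commutator_top [Group.IsNilpotent E] {H P : Subgroup E} [P.Normal]
    (h : H ≤ P ⊔ ⁅H, ⊤⁆) : H ≤ P := by
  have hmap : H.map (QuotientGroup.mk' P) ≤ ⁅H.map (QuotientGroup.mk' P), ⊤⁆ := by
    refine (Subgroup.map_mono h).trans ?_
    rw [Subgroup.map_sup, QuotientGroup.map_mk'_self, bot_sup_eq, Subgroup.map_commutator]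
    exact Subgroup.commutator_mono le_rfl le_top
  have hbot := eq_bot_of_le_commutator_top hmap
  rwa [Subgroup.map_eq_bot_iff, QuotientGroup.ker_mk'] at hbot

theorem commutator_top_right_normal (H : Subgroup E) : ⁅H, (⊤ : Subgroup E)⁆.Normal :=
  Subgroup.normalizer_eq_top_iff.1 (top_le_iff.1 (Subgroup.normalizer_commutator_ge_right H ⊤))

theorem ker_conj : (MulAut.conj (G := E)).ker = Subgroup.center E := by
  ext t
  rw [MonoidHom.mem_ker, Subgroup.mem_center_iff, MulEquiv.ext_iff]
  simp only [MulAut.conj_apply, MulAut.one_apply, mul_inv_eq_iff_eq_mul]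
  exact forall_congr' fun _ => eq_comm

open scoped IsMulCommutative in
theorem pow_index_center_of_mem_commutator [(Subgroup.center E).FiniteIndex] {x : E}
    (hx : x ∈ commutator E) : x ^ (Subgroup.center E).index = 1 := by
  have h := Abelianization.commutator_subset_ker (MonoidHom.transferCenterPow E) hx
  rw [← MonoidHom.transferCenterPow_apply, MonoidHom.mem_ker.1 h, Subgroup.coe_one]

open scoped IsMulCommutative in
theorem finite_of_isMulTorsion_of_finiteIndex_center [Group.FG E]
    [(Subgroup.center E).FiniteIndex] (h : IsMulTorsion E) : Finite E := by
  have : Finite (Subgroup.center E) :=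
    CommGroup.finite_of_fg_isMulTorsion _ (h.subgroup _)
  exact Finite.of_subgroup_quotient (Subgroup.center E)

theorem isPGroup_semidirectProduct {p : ℕ} {ψ : F →* MulAut E} (hE : IsPGroup p E)
    (hF : IsPGroup p F) : IsPGroup p (E ⋊[ψ] F) := fun x => by
  obtain ⟨k, hk⟩ := hF x.right
  obtain ⟨n, hn⟩ : x ^ p ^ k ∈ (SemidirectProduct.inl : E →* E ⋊[ψ] F).range := by
    rw [SemidirectProduct.range_inl_eq_ker_rightHom, MonoidHom.mem_ker, map_pow]
    exact hk
  obtain ⟨l, hl⟩ := hE n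
  exact ⟨k + l, by rw [pow_add, pow_mul, ← hn, ← map_pow, hl, map_one]⟩

theorem commutatorElement_inr_inl (ψ : F →* MulAut E) (g : F) (t : E) :
    ⁅(SemidirectProduct.inr g : E ⋊[ψ] F), (SemidirectProduct.inl t : E ⋊[ψ] F)⁆ =
      SemidirectProduct.inl (ψ g t * t⁻¹) := by
  rw [map_mul, SemidirectProduct.inl_aut, map_inv, map_inv, commutatorElement_def]

-- For a derivation `f` this says that `Nat.card F` kills its class in `H¹(F, A)`.
theorem pow_card_mul_map_prod {A : Type*} [CommGroup A] [Fintype F] {f : F → A} {a : A →* A}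
    {g : F} (h : ∀ x, f (g * x) = f g * a (f x)) :
    f g ^ Nat.card F * a (∏ x, f x) = ∏ x, f x := by
  calc f g ^ Nat.card F * a (∏ x, f x)
      = ∏ x, f (g * x) := by
        simp only [h, Finset.prod_mul_distrib, Finset.prod_const, Finset.card_univ, map_prod,
          Nat.card_eq_fintype_card]
    _ = ∏ x, f x := Equiv.prod_comp (Equiv.mulLeft g) f

theorem pow_mem_sPow {H : Subgroup E} {x : E} (hx : x ∈ H) (k : ℕ) : x ^ k ∈ sPow H k :=
  Subgroup.subset_closure ⟨x, hx, rfl⟩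

theorem map_sPow (f : E →* F) (H : Subgroup E) (k : ℕ) : (sPow H k).map f = sPow (H.map f) k := by
  simp only [sPow, MonoidHom.map_closure, Subgroup.coe_map, Set.image_image, map_pow]

instance sPow_normal {H : Subgroup E} [H.Normal] {k : ℕ} : (sPow H k).Normal :=
  Subgroup.normal_iff_map_conj_eq.2 fun g => by rw [map_sPow, Subgroup.Normal.map_conj_eq]

end GroupTheory

namespace NATensor

variable {M G : Type*} [Group M] [Group G] {μ : M →* G} {φ : G →* MulAut M}

theorem tprod_mul_left (m m' : M) (g : G) :
    natTprod μ φ (m * m') g =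
      natTprod μ φ (φ (μ m) m') (μ m * g * (μ m)⁻¹) * natTprod μ φ m g :=
  PresentedGroup.mk_eq_mk_of_mul_inv_mem (Or.inl ⟨m, m', g, rfl⟩)

theorem tprod_mul_right (m : M) (g g' : G) :
    natTprod μ φ m (g * g') =
      natTprod μ φ m g * natTprod μ φ (φ g m) (g * g' * g⁻¹) :=
  PresentedGroup.mk_eq_mk_of_mul_inv_mem (Or.inr ⟨m, g, g', rfl⟩)

theorem tprod_one_left (g : G) : natTprod μ φ 1 g = 1 := by
  simpa using tprod_mul_left (μ := μ) (φ := φ) 1 1 g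

theorem tprod_one_right (m : M) : natTprod μ φ m 1 = 1 := by
  simpa using tprod_mul_right (μ := μ) (φ := φ) m 1 1

theorem hom_ext {H : Type*} [Group H] {f f' : NATensor μ φ →* H}
    (h : ∀ m g, f (natTprod μ φ m g) = f' (natTprod μ φ m g)) : f = f' :=
  PresentedGroup.ext fun x => h x.1 x.2

theorem subgroup_eq_top {H : Subgroup (NATensor μ φ)}
    (h : ∀ m g, natTprod μ φ m g ∈ H) : H = ⊤ :=
  eq_top_iff.2 fun x _ => PresentedGroup.generated_by _ H (fun j => h j.1 j.2) x

section Action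

variable (hcm : IsCrossedModule μ φ)

/-- The endomorphism `m ⊗ h ↦ ᵍm ⊗ ᵍh` of `M ⊗ G`, the underlying map of the automorphism
`NATensor.act hcm g`. -/
def actHom (g : G) : NATensor μ φ →* NATensor μ φ :=
  PresentedGroup.toGroup (f := fun x => natTprod μ φ (φ g x.1) (MulAut.conj g x.2)) (by
    have hφ : ∀ h m, φ (MulAut.conj g h) (φ g m) = φ g (φ h m) := fun h m => by
      simp only [← MulAut.mul_apply, ← map_mul, MulAut.conj_apply, inv_mul_cancel_right]
    rintro r (⟨m, m', h, rfl⟩ | ⟨m, h, h', rfl⟩) <;>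
      simp only [map_mul, map_inv, FreeGroup.lift_apply_of, mul_inv_eq_one]
    · rw [tprod_mul_left, hcm.map_act, ← MulAut.conj_apply g, hφ]
    · rw [tprod_mul_right, hφ])

theorem actHom_tprod (g : G) (m : M) (h : G) :
    actHom hcm g (natTprod μ φ m h) = natTprod μ φ (φ g m) (g * h * g⁻¹) :=
  PresentedGroup.toGroup.of _

theorem actHom_one : actHom hcm 1 = MonoidHom.id _ :=
  hom_ext fun m h => by simp [actHom_tprod]

theorem actHom_mul (g g' : G) : actHom hcm (g * g') = (actHom hcm g).comp (actHom hcm g') :=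
  hom_ext fun m h => by simp [actHom_tprod, mul_assoc]

/-- The diagonal action `ᵍ(m ⊗ h) = ᵍm ⊗ ᵍh` of `G` on `M ⊗ G` by automorphisms. -/
def act : G →* MulAut (NATensor μ φ) where
  toFun g := MonoidHom.toMulEquiv (actHom hcm g) (actHom hcm g⁻¹)
    (by rw [← actHom_mul, inv_mul_cancel, actHom_one])
    (by rw [← actHom_mul, mul_inv_cancel, actHom_one])
  map_one' := MulEquiv.ext fun x => DFunLike.congr_fun (actHom_one hcm) x
  map_mul' g g' := MulEquiv.ext fun x => DFunLike.congr_fun (actHom_mul hcm g g') x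

theorem act_tprod (g : G) (m : M) (h : G) :
    act hcm g (natTprod μ φ m h) = natTprod μ φ (φ g m) (g * h * g⁻¹) :=
  actHom_tprod hcm g m h

theorem tprod_mul_left_act (m m' : M) (g : G) :
    natTprod μ φ (m * m') g = act hcm (μ m) (natTprod μ φ m' g) * natTprod μ φ m g := by
  rw [tprod_mul_left, act_tprod]

theorem tprod_mul_right_act (m : M) (g g' : G) :
    natTprod μ φ m (g * g') = natTprod μ φ m g * act hcm g (natTprod μ φ m g') := by
  rw [tprod_mul_right, act_tprod]

-- Both sides arise from expanding `x * m ⊗ g * h`, in the two possible orders.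
theorem act_map_mul_tprod_mul_tprod (x m : M) (g h : G) :
    act hcm (μ x * g) (natTprod μ φ m h) * natTprod μ φ x g =
      natTprod μ φ x g * act hcm (g * μ x) (natTprod μ φ m h) := by
  have expand := tprod_mul_left_act hcm x m (g * h)
  rw [tprod_mul_right_act hcm m, tprod_mul_right_act hcm x, tprod_mul_right_act hcm (x * m),
    tprod_mul_left_act hcm x m g, tprod_mul_left_act hcm x m h] at expand
  simp only [map_mul, mul_assoc, mul_right_inj] at expand
  simp only [← mul_assoc, mul_left_inj] at expand
  simpa only [map_mul, MulAut.mul_apply] using expand.symm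

theorem conj_tprod (x : M) (g : G) :
    MulAut.conj (natTprod μ φ x g) = act hcm ⁅μ x, g⁆ := by
  have hhom : (MulAut.conj (natTprod μ φ x g) * act hcm (g * μ x)).toMonoidHom =
      (act hcm (μ x * g)).toMonoidHom :=
    hom_ext fun m h => mul_inv_eq_of_eq_mul (act_map_mul_tprod_mul_tprod hcm x m g h).symm
  have haut : MulAut.conj (natTprod μ φ x g) * act hcm (g * μ x) = act hcm (μ x * g) :=
    MulEquiv.ext fun t => DFunLike.congr_fun hhom t
  rw [eq_mul_inv_of_mul_eq haut, ← map_inv, ← map_mul, mul_inv_rev, ← mul_assoc,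
    commutatorElement_def]

theorem range_conj_le :
    (MulAut.conj (G := NATensor μ φ)).range ≤ ((act hcm).comp μ).range := by
  have h : ((act hcm).comp μ).range.comap MulAut.conj = ⊤ := subgroup_eq_top fun x g =>
    ⟨x * (φ g x)⁻¹, by
      rw [conj_tprod hcm, MonoidHom.comp_apply, map_mul, map_inv, hcm.map_act,
        commutatorElement_def]
      simp only [mul_inv_rev, inv_inv, mul_assoc]⟩
  rw [MonoidHom.range_eq_map, Subgroup.map_le_iff_le_comap, h]

-- Expand `m * x ⊗ g = x * (x⁻¹ * m * x) ⊗ g` along both factorizations; the action of `μ x` turns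
-- `x⁻¹ * m * x` into `m` by the Peiffer identity.
theorem tprod_commutatorElement (m x : M) (g : G) :
    natTprod μ φ m ⁅μ x, g⁆ = act hcm (μ m) (natTprod μ φ x g) * (natTprod μ φ x g)⁻¹ := by
  have hx : natTprod μ φ (m * x) g = natTprod μ φ m (⁅μ x, g⁆ * g) * natTprod μ φ x g := by
    rw [show m * x = x * (x⁻¹ * m * x) by group, tprod_mul_left, hcm.peiffer,
      commutatorElement_def]
    simp only [mul_assoc, inv_mul_cancel, mul_one, mul_inv_cancel_left, mul_inv_cancel]
  rw [tprod_mul_left_act hcm, tprod_mul_right_act hcm, ← conj_tprod, MulAut.conj_apply,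
    mul_assoc, inv_mul_cancel_right, ← mul_assoc, mul_left_inj] at hx
  exact eq_mul_inv_of_mul_eq hx.symm

end Action

section Finiteness

/-- The product over `h : G` of the images of `m ⊗ h` in the abelianization of `M ⊗ G`, the
unnormalized average used to bound the exponent of the abelianization. -/
noncomputable def abProd (μ : M →* G) (φ : G →* MulAut M) [Fintype G] (m : M) :
    Abelianization (NATensor μ φ) :=
  ∏ h, Abelianization.of (natTprod μ φ m h)

theorem index_center_dvd_card (hcm : IsCrossedModule μ φ) :
    (Subgroup.center (NATensor μ φ)).index ∣ Nat.card M := by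
  rw [← ker_conj, Subgroup.index_ker]
  exact (Subgroup.card_dvd_of_le (range_conj_le hcm)).trans (Subgroup.card_range_dvd _)

theorem act_abelianizationCongr_abProd [Fintype G] (hcm : IsCrossedModule μ φ) (g : G) (m : M) :
    (act hcm g).abelianizationCongr (abProd μ φ m) = abProd μ φ (φ g m) := by
  simp only [abProd, map_prod, abelianizationCongr_of, act_tprod]
  exact Equiv.prod_comp (MulAut.conj g).toEquiv
    fun h => Abelianization.of (natTprod μ φ (φ g m) h)

theorem abProd_mul [Fintype G] (hcm : IsCrossedModule μ φ) (x m : M) :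
    abProd μ φ (x * m) = abProd μ φ x * (act hcm (μ x)).abelianizationCongr (abProd μ φ m) := by
  simp only [abProd, tprod_mul_left_act hcm, map_mul, map_prod, abelianizationCongr_of,
    Finset.prod_mul_distrib, mul_comm]

theorem abProd_pow_card [Finite M] [Fintype G] (hcm : IsCrossedModule μ φ) (x : M) :
    abProd μ φ x ^ Nat.card M = 1 := by
  have := Fintype.ofFinite M
  have hfix : (act hcm (μ x)).abelianizationCongr (∏ m, abProd μ φ m) = ∏ m, abProd μ φ m := by
    simp only [map_prod, act_abelianizationCongr_abProd]
    exact Equiv.prod_comp (φ (μ x)).toEquiv (abProd μ φ)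
  have h := pow_card_mul_map_prod
    (a := (act hcm (μ x)).abelianizationCongr.toMonoidHom) (abProd_mul hcm x)
  rwa [MulEquiv.toMonoidHom_eq_coe, MonoidHom.coe_coe, hfix, mul_eq_right] at h

theorem abelianization_of_tprod_pow [Finite M] [Finite G] (hcm : IsCrossedModule μ φ) (m : M)
    (g : G) : Abelianization.of (natTprod μ φ m g) ^ (Nat.card G * Nat.card M) = 1 := by
  have := Fintype.ofFinite G
  have h : Abelianization.of (natTprod μ φ m g) ^ Nat.card G *
      (act hcm g).abelianizationCongr (abProd μ φ m) = abProd μ φ m :=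
    pow_card_mul_map_prod (a := (act hcm g).abelianizationCongr.toMonoidHom) fun x => by
      simp [tprod_mul_right_act hcm]
  rw [pow_mul, eq_div_of_mul_eq' h, div_pow, ← map_pow, abProd_pow_card hcm, map_one, div_one]

theorem pow_mem_commutator [Finite M] [Finite G] (hcm : IsCrossedModule μ φ) (t : NATensor μ φ) :
    t ^ (Nat.card G * Nat.card M) ∈ commutator (NATensor μ φ) := by
  have h : (powMonoidHom (Nat.card G * Nat.card M)).comp
      (Abelianization.of (G := NATensor μ φ)) = 1 :=
    hom_ext fun m g => abelianization_of_tprod_pow hcm m g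
  rw [← Abelianization.ker_of, MonoidHom.mem_ker, map_pow]
  exact DFunLike.congr_fun h t

theorem finiteIndex_center [Finite M] (hcm : IsCrossedModule μ φ) :
    (Subgroup.center (NATensor μ φ)).FiniteIndex :=
  ⟨ne_zero_of_dvd_ne_zero Nat.card_pos.ne' (index_center_dvd_card hcm)⟩

theorem pow_card_eq_one [Finite M] [Finite G] (hcm : IsCrossedModule μ φ) (t : NATensor μ φ) :
    t ^ (Nat.card G * Nat.card M * Nat.card M) = 1 := by
  have := finiteIndex_center hcm
  obtain ⟨k, hk⟩ := index_center_dvd_card hcm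
  rw [pow_mul]
  nth_rw 2 [hk]
  rw [pow_mul, pow_index_center_of_mem_commutator (pow_mem_commutator hcm t), one_pow]

theorem finite [Finite M] [Finite G] (hcm : IsCrossedModule μ φ) : Finite (NATensor μ φ) := by
  have := finiteIndex_center hcm
  have : Group.FG (NATensor μ φ) :=
    Group.fg_of_surjective (PresentedGroup.mk_surjective (tensorRels μ φ))
  exact finite_of_isMulTorsion_of_finiteIndex_center fun t => isOfFinOrder_iff_pow_eq_one.2
    ⟨_, by have := Nat.card_pos (α := M); have := Nat.card_pos (α := G); positivity,
      pow_card_eq_one hcm t⟩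

theorem isPGroup [Finite M] [Finite G] (hcm : IsCrossedModule μ φ) {p : ℕ} [Fact p.Prime]
    (hM : IsPGroup p M) (hG : IsPGroup p G) : IsPGroup p (NATensor μ φ) := by
  obtain ⟨a, ha⟩ := IsPGroup.iff_card.1 hM
  obtain ⟨b, hb⟩ := IsPGroup.iff_card.1 hG
  refine isPGroup_iff_pow_pow_eq_one.2 fun t => ⟨b + a + a, ?_⟩
  rw [pow_add, pow_add, ← ha, ← hb, pow_card_eq_one hcm]

end Finiteness

section Powerful

open SemidirectProduct

variable (hcm : IsCrossedModule μ φ)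

/-- The homomorphism `g ↦ (m ⊗ g) g` from `G` to `(M ⊗ G) ⋊ G`; its multiplicativity is the second
defining relation of `M ⊗ G`. -/
def tprodRightHom (m : M) : G →* NATensor μ φ ⋊[act hcm] G where
  toFun g := inl (natTprod μ φ m g) * inr g
  map_one' := by rw [tprod_one_right, map_one, map_one, mul_one]
  map_mul' g g' := by
    rw [tprod_mul_right_act hcm, map_mul, inl_aut, map_mul, map_inv]
    group

theorem tprodRightHom_apply (m : M) (g : G) :
    tprodRightHom hcm m g = inl (natTprod μ φ m g) * inr g :=
  rfl

/-- The subgroup `⁅μ M, M ⊗ G⁆` of `(M ⊗ G) ⋊ G`, which measures how far `μ M` is from acting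
trivially on `M ⊗ G`. -/
def actCommutator : Subgroup (NATensor μ φ ⋊[act hcm] G) :=
  ⁅(μ.range.map inr : Subgroup (NATensor μ φ ⋊[act hcm] G)),
    (inl : NATensor μ φ →* NATensor μ φ ⋊[act hcm] G).range⁆

theorem commutatorElement_mem_actCommutator {g : G} (hg : g ∈ μ.range) (t : NATensor μ φ) :
    ⁅(inr g : NATensor μ φ ⋊[act hcm] G), (inl t : NATensor μ φ ⋊[act hcm] G)⁆ ∈
      actCommutator hcm :=
  Subgroup.commutator_mem_commutator (Subgroup.mem_map_of_mem inr hg) ⟨t, rfl⟩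

variable {p : ℕ} {Q : Subgroup (NATensor μ φ ⋊[act hcm] G)} [Q.Normal]

theorem mk_tprodRightHom_pow (hodd : Odd p) (hpow : sPow inl.range p ≤ Q)
    (hcentral : ⁅actCommutator hcm, ⊤⁆ ≤ Q) (m : M) {g : G} (hg : g ∈ μ.range) :
    QuotientGroup.mk' Q (tprodRightHom hcm m (g ^ p)) = QuotientGroup.mk' Q (inr (g ^ p)) := by
  set q := QuotientGroup.mk' Q
  set t : NATensor μ φ ⋊[act hcm] G := inl (natTprod μ φ m g)
  have hcomm : ∀ e, Commute ⁅q (inr g), q t⁆ (q e) := fun e => by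
    rw [← commutatorElement_eq_one_iff_commute, ← map_commutatorElement, ← map_commutatorElement]
    exact (QuotientGroup.eq_one_iff _).2 (hcentral (Subgroup.commutator_mem_commutator
      (commutatorElement_mem_actCommutator hcm hg _) (Subgroup.mem_top e)))
  have hexp : q t ^ p = 1 := by
    rw [← map_pow]
    exact (QuotientGroup.eq_one_iff _).2 (hpow (pow_mem_sPow (MonoidHom.mem_range.2 ⟨_, rfl⟩) p))
  rw [map_pow, map_pow, tprodRightHom_apply, map_mul,
    mul_pow_eq_pow_right_of_odd hodd (hcomm _) (hcomm _) hexp, map_pow, map_pow]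

theorem inl_tprod_mem (hodd : Odd p) (hpow : sPow inl.range p ≤ Q)
    (hcentral : ⁅actCommutator hcm, ⊤⁆ ≤ Q) (m : M) {g : G}
    (hg : g ∈ sPow μ.range p) : inl (natTprod μ φ m g) ∈ Q := by
  have hle : sPow μ.range p ≤ ((QuotientGroup.mk' Q).comp (tprodRightHom hcm m)).eqLocus
      ((QuotientGroup.mk' Q).comp inr) := by
    refine (Subgroup.closure_le _).2 ?_
    rintro _ ⟨g, hg, rfl⟩
    exact mk_tprodRightHom_pow hcm hodd hpow hcentral m hg
  have h : QuotientGroup.mk' Q (tprodRightHom hcm m g) = QuotientGroup.mk' Q (inr g) := hle hg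
  rw [tprodRightHom_apply, map_mul, mul_eq_right] at h
  exact (QuotientGroup.eq_one_iff _).1 h

theorem actCommutator_le (hodd : Odd p)
    (hemb : ⁅μ.range, (⊤ : Subgroup G)⁆ ≤ sPow μ.range p) (hpow : sPow inl.range p ≤ Q)
    (hcentral : ⁅actCommutator hcm, ⊤⁆ ≤ Q) : actCommutator hcm ≤ Q := by
  rw [actCommutator, Subgroup.commutator_le]
  rintro _ ⟨_, ⟨m, rfl⟩, rfl⟩ _ ⟨t, rfl⟩
  let q : NATensor μ φ →* _ := (QuotientGroup.mk' Q).comp inl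
  have hfix : q.comp (act hcm (μ m)).toMonoidHom = q := hom_ext fun x g => by
    have hmem := hemb (Subgroup.commutator_mem_commutator ⟨x, rfl⟩ (Subgroup.mem_top g))
    have h := (QuotientGroup.eq_one_iff _).2 (inl_tprod_mem hcm hodd hpow hcentral m hmem)
    rw [tprod_commutatorElement hcm] at h
    rw [← mul_inv_eq_one, ← map_inv, MonoidHom.comp_apply, ← map_mul]
    exact h
  rw [commutatorElement_inr_inl, ← QuotientGroup.eq_one_iff]
  change q _ = 1
  rw [map_mul, map_inv, mul_inv_eq_one]
  exact DFunLike.congr_fun hfix t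

theorem act_mul_inv_mem_sPow [Group.IsNilpotent (NATensor μ φ ⋊[act hcm] G)] (hodd : Odd p)
    (hemb : ⁅μ.range, (⊤ : Subgroup G)⁆ ≤ sPow μ.range p) (m : M) (t : NATensor μ φ) :
    act hcm (μ m) t * t⁻¹ ∈ sPow (⊤ : Subgroup (NATensor μ φ)) p := by
  have : (inl : NATensor μ φ →* NATensor μ φ ⋊[act hcm] G).range.Normal := by
    rw [range_inl_eq_ker_rightHom]; infer_instance
  have := commutator_top_right_normal (actCommutator hcm)
  have hle : actCommutator hcm ≤ sPow inl.range p := le_of_le_sup_commutator_top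
    (actCommutator_le hcm hodd hemb le_sup_left le_sup_right)
  have h := hle (commutatorElement_mem_actCommutator hcm ⟨m, rfl⟩ t)
  rwa [commutatorElement_inr_inl, MonoidHom.range_eq_map, ← map_sPow,
    Subgroup.mem_map_iff_mem inl_injective] at h

theorem commutatorElement_mem {P : Subgroup (NATensor μ φ)}
    (hP : ∀ (m : M) (t : NATensor μ φ), act hcm (μ m) t * t⁻¹ ∈ P) (s t : NATensor μ φ) :
    ⁅s, t⁆ ∈ P := by
  obtain ⟨m, hm⟩ := range_conj_le hcm ⟨s, rfl⟩
  rw [commutatorElement_def, ← MulAut.conj_apply, ← hm]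
  exact hP m t

theorem mk_tprod_pow_left {P : Subgroup (NATensor μ φ)} [P.Normal]
    (hP : ∀ (m : M) (t : NATensor μ φ), act hcm (μ m) t * t⁻¹ ∈ P) (m : M) (g : G) (k : ℕ) :
    QuotientGroup.mk' P (natTprod μ φ (m ^ k) g) = QuotientGroup.mk' P (natTprod μ φ m g) ^ k := by
  have hfix : ∀ t, QuotientGroup.mk' P (act hcm (μ m) t) = QuotientGroup.mk' P t := fun t => by
    rw [← mul_inv_eq_one, ← map_inv, ← map_mul]
    exact (QuotientGroup.eq_one_iff _).2 (hP m t)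
  induction k with
  | zero => simp only [pow_zero, tprod_one_left, map_one]
  | succ k ih => rw [pow_succ', tprod_mul_left_act hcm, map_mul, hfix, ih, pow_succ]

theorem tprod_pow_left_mem_sPow
    (hP : ∀ (m : M) (t : NATensor μ φ), act hcm (μ m) t * t⁻¹ ∈ sPow (⊤ : Subgroup _) p)
    (m : M) (g : G) : natTprod μ φ (m ^ p) g ∈ sPow (⊤ : Subgroup (NATensor μ φ)) p := by
  rw [← QuotientGroup.eq_one_iff]
  refine (mk_tprod_pow_left hcm hP m g p).trans ?_
  rw [← map_pow]
  exact (QuotientGroup.eq_one_iff _).2 (pow_mem_sPow (Subgroup.mem_top _) p)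

end Powerful

end NATensor

theorem stmt_14_general {p : ℕ} (hp : p.Prime) (hodd : Odd p)
    {M G : Type*} [Group M] [Group G] [Finite M] [Finite G]
    (hM : IsPGroup p M) (hG : IsPGroup p G)
    (μ : M →* G) (φ : G →* MulAut M) (hcm : IsCrossedModule μ φ)
    (hemb : ⁅μ.range, (⊤ : Subgroup G)⁆ ≤ sPow μ.range p) :
    Subgroup.closure {x : NATensor μ φ | ∃ m g, x = natTprod μ φ (m ^ p) g} ≤
        sPow (⊤ : Subgroup (NATensor μ φ)) p ∧
      Finite (NATensor μ φ) ∧ IsPGroup p (NATensor μ φ) ∧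
      ⁅(⊤ : Subgroup (NATensor μ φ)), (⊤ : Subgroup (NATensor μ φ))⁆ ≤
        sPow (⊤ : Subgroup (NATensor μ φ)) p := by
  have := Fact.mk hp
  have hfin := NATensor.finite hcm
  have hT := NATensor.isPGroup hcm hM hG
  have : Finite (NATensor μ φ ⋊[NATensor.act hcm] G) :=
    Finite.of_equiv _ SemidirectProduct.equivProd.symm
  have : Group.IsNilpotent (NATensor μ φ ⋊[NATensor.act hcm] G) :=
    (isPGroup_semidirectProduct hT hG).isNilpotent
  have hact := NATensor.act_mul_inv_mem_sPow hcm hodd hemb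
  refine ⟨(Subgroup.closure_le _).2 ?_, hfin, hT,
    Subgroup.commutator_le.2 fun s _ t _ => NATensor.commutatorElement_mem hcm hact s t⟩
  rintro _ ⟨m, g, rfl⟩
  exact NATensor.tprod_pow_left_mem_sPow hcm hact m g

theorem stmt_14 {p : ℕ} (hp : p.Prime) (hodd : Odd p)
    {M G : Type*} [Group M] [Group G] [Finite M] [Finite G]
    (hM : IsPGroup p M) (hG : IsPGroup p G)
    (μ : M →* G) (φ : G →* MulAut M) (hcm : IsCrossedModule μ φ)
    (hMpow : ⁅(⊤ : Subgroup M), (⊤ : Subgroup M)⁆ ≤ sPow (⊤ : Subgroup M) p)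
    (hemb : ⁅μ.range, (⊤ : Subgroup G)⁆ ≤ sPow μ.range p) :
    Subgroup.closure {x : NATensor μ φ | ∃ m g, x = natTprod μ φ (m ^ p) g} ≤
        sPow (⊤ : Subgroup (NATensor μ φ)) p ∧
      Finite (NATensor μ φ) ∧ IsPGroup p (NATensor μ φ) ∧
      ⁅(⊤ : Subgroup (NATensor μ φ)), (⊤ : Subgroup (NATensor μ φ))⁆ ≤
        sPow (⊤ : Subgroup (NATensor μ φ)) p :=
  stmt_14_general hp hodd hM hG μ φ hcm hemb
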